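/- arXiv:1808.08067 — 2 statements merged into one kernel-verified Lean document; each statement's English description precedes it below -/
import Mathlib

section
/- If a countable hypergraph E has no minimal cover, then E contains a subhypergraph isomorphic to the hypergraph ω (i.e., there exist a sequence of edges (E_n) in E and an infinite set Ω ⊆ ⋃E together with a bijection f : ℕ → Ω such that f⁻¹(E_n ∩ Ω) = {0,…,n−1} for all n). -/
/-- `C` is a cover of the hypergraph `E`. -/
def IsCover {α : Type*} (E C : Set (Set α)) : Prop :=
  C ⊆ E ∧ ⋃₀ C = ⋃₀ E

/-- `C` is a minimal cover of the hypergraph `E`. -/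
def IsMinimalCover {α : Type*} (E C : Set (Set α)) : Prop :=
  IsCover E C ∧ ∀ D ⊆ C, IsCover E D → D = C

/-- `S` is a subhypergraph of `E`. -/
def IsSubhypergraph {α : Type*} (E S : Set (Set α)) : Prop :=
  ∃ F ⊆ E, ∃ A ⊆ ⋃₀ F, S = (fun T => T ∩ A) '' F

/-- `S` has a maximal edge. -/
def HasMaximalEdge {α : Type*} (S : Set (Set α)) : Prop :=
  ∃ M ∈ S, ∀ T ∈ S, M ⊆ T → T = M

/-- `S` is isomorphic to the hypergraph ω, whose vertex set is ℕ and whose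
edges are the initial segments `{0, …, n-1}` for `n : ℕ`. -/
def IsoToOmega {α : Type*} (S : Set (Set α)) : Prop :=
  ∃ f : ℕ → α, Function.Injective f ∧ Set.range f = ⋃₀ S ∧
    S = {T | ∃ n : ℕ, T = f '' Set.Iio n}

/-- Edges of `E` avoiding `X` and containing `x`. -/
def edgesAt {α : Type*} (E : Set (Set α)) (X : Set α) (x : α) : Set (Set α) :=
  {T | T ∈ E ∧ Disjoint T X ∧ x ∈ T}

/-- The conclusion of the theorem. -/
def HasOmega {α : Type*} (E : Set (Set α)) : Prop :=
  ∃ Eseq : ℕ → Set α, (∀ n, Eseq n ∈ E) ∧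
      ∃ f : ℕ → α, Function.Injective f ∧ Set.range f ⊆ ⋃₀ E ∧
        ∀ n, f ⁻¹' (Eseq n ∩ Set.range f) = Set.Iio n

theorem wf_of_not_hasOmega {α : Type*} (E : Set (Set α)) (X : Set α) (h : ¬ HasOmega E) :
    WellFounded (fun y x : α => edgesAt E X y ⊂ edgesAt E X x) := by
  rw [wellFounded_iff_isEmpty_descending_chain]
  refine ⟨fun ⟨f, hf⟩ => h ?_⟩
  have hanti : StrictAnti (fun n => edgesAt E X (f n)) := strictAnti_nat_of_succ_lt hf
  have hex : ∀ n, ∃ T, T ∈ edgesAt E X (f n) ∧ T ∉ edgesAt E X (f (n+1)) := fun n =>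
    Set.exists_of_ssubset (hf n)
  choose S hS hS' using hex
  refine ⟨S, fun n => (hS n).1, fun n => f (n+1), ?_, ?_, ?_⟩
  · intro a b hab
    have : edgesAt E X (f (a+1)) = edgesAt E X (f (b+1)) := congrArg _ hab
    have := hanti.injective this
    omega
  · rintro _ ⟨n, rfl⟩
    exact ⟨S (n+1), (hS (n+1)).1, (hS (n+1)).2.2⟩
  · intro n
    ext k
    simp only [Set.mem_preimage, Set.mem_inter_iff, Set.mem_range, exists_apply_eq_apply,
      and_true, Set.mem_Iio]
    constructor
    · intro hk
      by_contra hlt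
      have h1 : edgesAt E X (f (k+1)) ⊆ edgesAt E X (f (n+1)) := hanti.antitone (by omega)
      exact hS' n (h1 ⟨(hS n).1, (hS n).2.1, hk⟩)
    · intro hk
      have h1 : edgesAt E X (f n) ⊆ edgesAt E X (f (k+1)) := hanti.antitone (by omega)
      exact (h1 (hS n)).2.2

/-- Partial construction: chosen edges `p.1`, private vertices `p.2`. -/
def Good {α : Type*} (E : Set (Set α)) (p : Set (Set α) × Set α) : Prop :=
  p.1 ⊆ E ∧ (∀ T ∈ p.1, ∃ x ∈ p.2, x ∈ T ∧ ∀ T' ∈ p.1, x ∈ T' → T' = T) ∧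
    ∀ w ∈ ⋃₀ E, w ∈ ⋃₀ p.1 ∨ (edgesAt E p.2 w).Nonempty

/-- Extension of partial constructions. -/
def PExt {α : Type*} (p q : Set (Set α) × Set α) : Prop :=
  p.1 ⊆ q.1 ∧ p.2 ⊆ q.2 ∧ ∀ T ∈ q.1, T ∉ p.1 → Disjoint T p.2

theorem PExt.rfl' {α : Type*} (p : Set (Set α) × Set α) : PExt p p :=
  ⟨subset_rfl, subset_rfl, fun _ h h' => absurd h h'⟩

theorem PExt.trans' {α : Type*} {p q r : Set (Set α) × Set α} (h : PExt p q) (h' : PExt q r) :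
    PExt p r := by
  refine ⟨h.1.trans h'.1, h.2.1.trans h'.2.1, fun T hT hTp => ?_⟩
  by_cases hq : T ∈ q.1
  · exact h.2.2 T hq hTp
  · exact (h'.2.2 T hT hq).mono_right h.2.1

theorem good_step {α : Type*} (E : Set (Set α)) (h : ¬ HasOmega E)
    (p : Set (Set α) × Set α) (hp : Good E p) (v : α) (hv : v ∈ ⋃₀ E) :
    ∃ q, Good E q ∧ PExt p q ∧ v ∈ ⋃₀ q.1 := by
  by_cases hvc : v ∈ ⋃₀ p.1
  · exact ⟨p, hp, PExt.rfl' p, hvc⟩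
  obtain ⟨x, ⟨hxE, hxC, hxv⟩, hmin⟩ := (wf_of_not_hasOmega E p.2 h).has_min
    {x | x ∈ ⋃₀ E ∧ x ∉ ⋃₀ p.1 ∧ edgesAt E p.2 x ⊆ edgesAt E p.2 v} ⟨v, hv, hvc, subset_rfl⟩
  obtain ⟨M, hM⟩ := (hp.2.2 x hxE).resolve_left hxC
  obtain ⟨hME, hMX, hxM⟩ := hM
  refine ⟨(insert M p.1, insert x p.2), ⟨?_, ?_, ?_⟩, ⟨?_, ?_, ?_⟩, ?_⟩
  · exact Set.insert_subset hME hp.1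
  · rintro T (rfl | hT)
    · refine ⟨x, Set.mem_insert _ _, hxM, ?_⟩
      rintro T' (rfl | hT') hx
      · rfl
      · exact absurd ⟨T', hT', hx⟩ hxC
    · obtain ⟨y, hy, hyT, hu⟩ := hp.2.1 T hT
      refine ⟨y, Set.mem_insert_of_mem _ hy, hyT, ?_⟩
      rintro T' (rfl | hT') hyT'
      · exact absurd hy (Set.disjoint_left.1 hMX hyT')
      · exact hu T' hT' hyT'
  · intro w hw
    by_contra hcon
    rw [not_or] at hcon
    obtain ⟨h1, h2⟩ := hcon
    have hwM : w ∉ M := fun hh => h1 ⟨M, Set.mem_insert _ _, hh⟩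
    have hwC : w ∉ ⋃₀ p.1 := fun ⟨T, hT, hh⟩ => h1 ⟨T, Set.mem_insert_of_mem _ hT, hh⟩
    have hsub : edgesAt E p.2 w ⊆ edgesAt E p.2 x := by
      rintro T ⟨a, b, c⟩
      refine ⟨a, b, ?_⟩
      by_contra hxT
      exact h2 ⟨T, a, Set.disjoint_insert_right.2 ⟨hxT, b⟩, c⟩
    refine hmin w ⟨hw, hwC, hsub.trans hxv⟩ ⟨hsub, fun hh => hwM (hh ⟨hME, hMX, hxM⟩).2.2⟩
  · exact Set.subset_insert _ _
  · exact Set.subset_insert _ _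
  · rintro T (rfl | hT) hn
    · exact hMX
    · exact absurd hT hn
  · exact ⟨M, Set.mem_insert _ _, (hxv ⟨hME, hMX, hxM⟩).2.2⟩

theorem exists_minimal {α : Type*} (E : Set (Set α)) (hVc : (⋃₀ E).Countable)
    (h : ¬ HasOmega E) : ∃ C, IsMinimalCover E C := by
  have hg0 : Good E (∅, ∅) :=
    ⟨Set.empty_subset _, fun T hT => absurd hT (Set.notMem_empty _), fun w ⟨T, hT, hw⟩ =>
      Or.inr ⟨T, hT, Set.disjoint_empty _, hw⟩⟩
  rcases (⋃₀ E).eq_empty_or_nonempty with he | hne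
  · refine ⟨∅, ⟨Set.empty_subset _, by simp [he]⟩, fun D hD _ => Set.subset_empty_iff.1 hD⟩
  obtain ⟨e, he⟩ := hVc.exists_eq_range hne
  have hev : ∀ n, e n ∈ ⋃₀ E := fun n => he ▸ Set.mem_range_self n
  choose! g hg using good_step E h
  let s : ℕ → Set (Set α) × Set α := fun n => Nat.rec (∅, ∅) (fun n p => g p (e n)) n
  have hs : ∀ n, s (n+1) = g (s n) (e n) := fun n => rfl
  have hgood : ∀ n, Good E (s n) := by
    intro n
    induction n with
    | zero => exact hg0
    | succ n ih => rw [hs]; exact (hg _ ih _ (hev n)).1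
  have hext : ∀ n m, n ≤ m → PExt (s n) (s m) := by
    intro n m hnm
    induction m, hnm using Nat.le_induction with
    | base => exact PExt.rfl' _
    | succ m _ ih => exact ih.trans' (by rw [hs]; exact (hg _ (hgood m) _ (hev m)).2.1)
  have hsubE : (⋃ n, (s n).1) ⊆ E := Set.iUnion_subset fun n => (hgood n).1
  refine ⟨⋃ n, (s n).1, ⟨hsubE, ?_⟩, ?_⟩
  · refine (Set.sUnion_subset_sUnion hsubE).antisymm ?_
    rw [he]
    rintro _ ⟨n, rfl⟩
    obtain ⟨T, hT, hx⟩ := (hg _ (hgood n) _ (hev n)).2.2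
    exact ⟨T, Set.mem_iUnion.2 ⟨n+1, hT⟩, hx⟩
  · intro D hD hcov
    refine hD.antisymm fun T hT => ?_
    obtain ⟨n, hn⟩ := Set.mem_iUnion.1 hT
    obtain ⟨x, hxX, hxT, hu⟩ := (hgood n).2.1 T hn
    have hxV : x ∈ ⋃₀ D := by
      rw [hcov.2]
      exact ⟨T, hsubE hT, hxT⟩
    obtain ⟨T', hT', hxT'⟩ := hxV
    obtain ⟨m, hm⟩ := Set.mem_iUnion.1 (hD hT')
    have hmem : T' ∈ (s n).1 := by
      by_contra hno
      have h1 := (hext m (max n m) (le_max_right _ _)).1 hm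
      exact Set.disjoint_left.1 ((hext n (max n m) (le_max_left _ _)).2.2 T' h1 hno) hxT' hxX
    rw [← hu T' hmem hxT']
    exact hT'

theorem stmt_3 {α : Type*} (E : Set (Set α))
    (hEc : E.Countable) (hVc : (⋃₀ E).Countable)
    (h : ¬ ∃ C, IsMinimalCover E C) :
    ∃ Eseq : ℕ → Set α, (∀ n, Eseq n ∈ E) ∧
      ∃ f : ℕ → α, Function.Injective f ∧ Set.range f ⊆ ⋃₀ E ∧
        ∀ n, f ⁻¹' (Eseq n ∩ Set.range f) = Set.Iio n := by
  by_contra hcon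
  exact h (exists_minimal E hVc hcon)
end

section
/- A countable hypergraph E has a minimal cover if there exist positive integers n and m such that every n-element subfamily F ⊆ E satisfies |⋂F| < m. -/
theorem step_aux {α : Type*} (E : Set (Set α))
    (h : ∃ n m : ℕ, 0 < n ∧ 0 < m ∧
      ∀ F ⊆ E, F.Finite → F.ncard = n →
        (⋂₀ F).Finite ∧ (⋂₀ F).ncard < m)
    (A : Set α) (F : Set (Set α)) (hF : F ⊆ E) (hA : A ⊆ ⋃₀ F) (v : α) (hv : v ∈ A) :
    ∃ e : Set α, ∃ p : α, e ∈ F ∧ p ∈ e ∧ p ∈ A ∧ v ∈ e ∧ A \ e ⊆ ⋃₀ {f ∈ F | p ∉ f} := by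
  obtain ⟨n, m, hn, hm, h⟩ := h
  have key : ∃ p ∈ A, (∀ f ∈ F, p ∈ f → v ∈ f) ∧
      ∀ q ∈ A, (∀ f ∈ F, q ∈ f → p ∈ f) → ∀ f ∈ F, p ∈ f → q ∈ f := by
    by_contra hcon
    push Not at hcon
    choose! q hqA hqp f hfF hpf hqf using hcon
    let P : ℕ → α := fun i => q^[i] v
    have hP : ∀ i, P (i+1) = q (P i) := fun i => Function.iterate_succ_apply' q i v
    have inv : ∀ i, P i ∈ A ∧ ∀ f ∈ F, P i ∈ f → v ∈ f := by
      intro i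
      induction i with
      | zero => exact ⟨hv, fun f _ h => h⟩
      | succ i ih =>
        rw [hP]
        exact ⟨hqA _ ih.1 ih.2, fun g hg hq => ih.2 g hg (hqp _ ih.1 ih.2 g hg hq)⟩
    let e : ℕ → Set α := fun i => f (P i)
    have heF : ∀ i, e i ∈ F := fun i => hfF _ (inv i).1 (inv i).2
    have hin : ∀ i, P i ∈ e i := fun i => hpf _ (inv i).1 (inv i).2
    have hout : ∀ i, P (i+1) ∉ e i := fun i => by
      rw [hP]; exact hqf _ (inv i).1 (inv i).2
    have anti : ∀ i j, i ≤ j → ∀ g ∈ F, P j ∈ g → P i ∈ g := by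
      intro i j hij g hg
      induction j, hij using Nat.le_induction with
      | base => exact id
      | succ j hj ih =>
        intro hx
        rw [hP] at hx
        exact ih (hqp _ (inv j).1 (inv j).2 g hg hx)
    have memiff : ∀ i j, P i ∈ e j ↔ i ≤ j := by
      intro i j
      constructor
      · intro hx
        by_contra hlt
        exact hout j (anti (j+1) i (by omega) _ (heF j) hx)
      · intro hij
        exact anti i j hij _ (heF j) (hin j)
    have einj : Function.Injective e := by
      intro i j hij
      have h1 := memiff i j
      have h2 := memiff j i
      rw [← hij] at h1
      rw [hij] at h2
      have h3 := h1.1 (hin i)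
      have h4 := h2.1 (hin j)
      omega
    have pinj : Function.Injective P := by
      intro i j hij
      have h1 := hin i
      have h2 := hin j
      rw [hij, memiff] at h1
      rw [← hij, memiff] at h2
      omega
    obtain ⟨hfin, hlt⟩ := h (e '' Set.Ico m (m+n))
      (by rintro _ ⟨i, _, rfl⟩; exact hF (heF i))
      ((Set.finite_Ico _ _).image _)
      (by rw [Set.ncard_image_of_injective _ einj, ← Finset.coe_Ico, Set.ncard_coe_finset]; simp)
    have hsub : P '' Set.Iio m ⊆ ⋂₀ (e '' Set.Ico m (m+n)) := by
      rintro _ ⟨i, hi, rfl⟩ _ ⟨j, hj, rfl⟩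
      rw [memiff]
      simp only [Set.mem_Iio, Set.mem_Ico] at hi hj
      omega
    have := Set.ncard_le_ncard hsub hfin
    rw [Set.ncard_image_of_injective _ pinj, ← Finset.coe_Iio, Set.ncard_coe_finset] at this
    rw [Nat.card_Iio] at this
    omega
  obtain ⟨p, hpA, hpv, hmin⟩ := key
  obtain ⟨e, he, hpe⟩ := hA hpA
  refine ⟨e, p, he, hpe, hpA, hpv e he hpe, ?_⟩
  rintro w ⟨hwA, hwe⟩
  by_contra hw
  refine hwe (hmin w hwA (fun g hg hwg => ?_) e he hpe)
  by_contra hpg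
  exact hw ⟨g, ⟨hg, hpg⟩, hwg⟩

theorem stmt_7 {α : Type*} (E : Set (Set α))
    (hEc : E.Countable) (hVc : (⋃₀ E).Countable)
    (h : ∃ n m : ℕ, 0 < n ∧ 0 < m ∧
      ∀ F ⊆ E, F.Finite → F.ncard = n →
        (⋂₀ F).Finite ∧ (⋂₀ F).ncard < m) :
    ∃ C, IsMinimalCover E C := by
  rcases (⋃₀ E).eq_empty_or_nonempty with h0 | hne
  · refine ⟨∅, ⟨Set.empty_subset _, by simp [h0]⟩, fun D hD _ => Set.subset_empty_iff.1 hD⟩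
  obtain ⟨v, hv⟩ := hVc.exists_eq_range hne
  have : Nonempty α := ⟨v 0⟩
  have st := step_aux E h
  choose! e p heF hpe hpA hve hcov using st
  classical
  let nx : ℕ → Set α × Set (Set α) → Set α × Set (Set α) := fun k s =>
    if v k ∈ s.1 then (s.1 \ e s.1 s.2 (v k), {f ∈ s.2 | p s.1 s.2 (v k) ∉ f}) else s
  let S : ℕ → Set α × Set (Set α) := fun k => Nat.rec (⋃₀ E, E) (fun k s => nx k s) k
  have hS : ∀ k, S (k+1) = nx k (S k) := fun k => rfl
  let ee : ℕ → Set α := fun k => e (S k).1 (S k).2 (v k)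
  let pp : ℕ → α := fun k => p (S k).1 (S k).2 (v k)
  have hpos : ∀ k, v k ∈ (S k).1 →
      S (k+1) = ((S k).1 \ ee k, {f ∈ (S k).2 | pp k ∉ f}) := by
    intro k hk
    rw [hS]; exact if_pos hk
  have hneg : ∀ k, v k ∉ (S k).1 → S (k+1) = S k := by
    intro k hk
    rw [hS]; exact if_neg hk
  have inv : ∀ k, (S k).2 ⊆ E ∧ (S k).1 ⊆ ⋃₀ (S k).2 := by
    intro k
    induction k with
    | zero => exact ⟨subset_rfl, subset_rfl⟩
    | succ k ih =>
      by_cases hk : v k ∈ (S k).1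
      · rw [hpos k hk]
        exact ⟨fun f hf => ih.1 hf.1, hcov _ _ ih.1 ih.2 _ hk⟩
      · rw [hneg k hk]; exact ih
  have mono1 : ∀ k, (S (k+1)).1 ⊆ (S k).1 := by
    intro k
    by_cases hk : v k ∈ (S k).1
    · rw [hpos k hk]; exact Set.diff_subset
    · rw [hneg k hk]
  have mono2 : ∀ k, (S (k+1)).2 ⊆ (S k).2 := by
    intro k
    by_cases hk : v k ∈ (S k).1
    · rw [hpos k hk]; exact fun f hf => hf.1
    · rw [hneg k hk]
  have anti1 : Antitone (fun k => (S k).1) := antitone_nat_of_succ_le mono1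
  have anti2 : Antitone (fun k => (S k).2) := antitone_nat_of_succ_le mono2
  have heeF : ∀ k, v k ∈ (S k).1 → ee k ∈ (S k).2 := fun k hk =>
    heF _ _ (inv k).1 (inv k).2 _ hk
  have hppe : ∀ k, v k ∈ (S k).1 → pp k ∈ ee k := fun k hk =>
    hpe _ _ (inv k).1 (inv k).2 _ hk
  have hppA : ∀ k, v k ∈ (S k).1 → pp k ∈ (S k).1 := fun k hk =>
    hpA _ _ (inv k).1 (inv k).2 _ hk
  have priv : ∀ k l, v k ∈ (S k).1 → v l ∈ (S l).1 → pp k ∈ ee l → k = l := by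
    intro k l hk hl hkl
    rcases lt_trichotomy k l with hlt | heq | hgt
    · exfalso
      have h1 : ee l ∈ (S (k+1)).2 := anti2 (Nat.succ_le_of_lt hlt) (heeF l hl)
      rw [hpos k hk] at h1
      exact h1.2 hkl
    · exact heq
    · exfalso
      have h1 : pp k ∈ (S (l+1)).1 := anti1 (Nat.succ_le_of_lt hgt) (hppA k hk)
      rw [hpos l hl] at h1
      exact h1.2 hkl
  have cov : ∀ k x, x ∈ ⋃₀ E → x ∉ (S k).1 → ∃ l, v l ∈ (S l).1 ∧ x ∈ ee l := by
    intro k x hx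
    induction k with
    | zero => exact fun hn => absurd hx hn
    | succ k ih =>
      intro hn
      by_cases hk : v k ∈ (S k).1
      · by_cases hxk : x ∈ (S k).1
        · rw [hpos k hk] at hn
          refine ⟨k, hk, ?_⟩
          by_contra hxe
          exact hn ⟨hxk, hxe⟩
        · exact ih hxk
      · rw [hneg k hk] at hn
        exact ih hn
  refine ⟨{c | ∃ k, v k ∈ (S k).1 ∧ c = ee k}, ⟨?_, ?_⟩, ?_⟩
  · rintro _ ⟨k, hk, rfl⟩
    exact (inv k).1 (heeF k hk)
  · apply Set.Subset.antisymm
    · apply Set.sUnion_subset_sUnion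
      rintro _ ⟨k, hk, rfl⟩
      exact (inv k).1 (heeF k hk)
    · intro x hx
      have hx' := hx
      rw [hv] at hx'
      obtain ⟨k, rfl⟩ := hx'
      by_cases hk : v k ∈ (S k).1
      · exact ⟨ee k, ⟨k, hk, rfl⟩, hve _ _ (inv k).1 (inv k).2 _ hk⟩
      · obtain ⟨l, hl, hxl⟩ := cov k _ hx hk
        exact ⟨ee l, ⟨l, hl, rfl⟩, hxl⟩
  · intro D hD hDc
    apply Set.Subset.antisymm hD
    rintro _ ⟨k, hk, rfl⟩
    have h1 : pp k ∈ ⋃₀ D := by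
      rw [hDc.2]
      exact ⟨ee k, (inv k).1 (heeF k hk), hppe k hk⟩
    obtain ⟨d, hd, hpd⟩ := h1
    obtain ⟨l, hl, rfl⟩ := hD hd
    have := priv k l hk hl hpd
    subst this
    exact hd
end
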